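/- For the Alexandroff square 𝔸: (i) for the full homeomorphism group 𝒢_𝔸, the family {cl(𝒢_𝔸·x) : x ∈ 𝔸} of closures of orbits has exactly 6 elements (i.e. h(𝒢_𝔸, 𝔸) = 5); (ii) for every subgroup G of the homeomorphism group of 𝔸, the family {cl(G·x) : x ∈ 𝔸} is either infinite or has at least 6 elements; (iii) for every natural number n ≥ 5 there exists a subgroup G of the homeomorphism group of 𝔸 whose family {cl(G·x) : x ∈ 𝔸} has exactly n + 1 elements; and (iv) there exists a subgroup G for which this family is infinite. Equivalently, P_h(𝔸) = {n : n ≥ 5} ∪ {+∞}. -/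

import Mathlib

open Set

/-- The unit interval `[0,1]` with its Euclidean (subspace) topology. -/
local notation "𝕀" => unitInterval

/-- The generating family for the Alexandroff square topology on `[0,1] × [0,1]`:
sets `{x} × U` with `U` open in `𝕀` and `x ∉ U`, together with sets
`([0,1] × U) \ (F × [0,1])` with `U` open in `𝕀` and `F` finite. -/
def alexBasis : Set (Set (𝕀 × 𝕀)) :=
  {S | (∃ (x : 𝕀) (U : Set 𝕀), IsOpen U ∧ x ∉ U ∧ S = ({x} : Set 𝕀) ×ˢ U) ∨
       (∃ (U F : Set 𝕀), IsOpen U ∧ F.Finite ∧ S = ((univ : Set 𝕀) ×ˢ U) \ (F ×ˢ (univ : Set 𝕀)))}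

/-- The Alexandroff square topology. -/
def alexTop : TopologicalSpace (𝕀 × 𝕀) := TopologicalSpace.generateFrom alexBasis

/-- The group of self-homeomorphisms of a topological space, under composition. -/
instance homeoGroup {X : Type*} [TopologicalSpace X] : Group (X ≃ₜ X) where
  mul f g := g.trans f
  one := Homeomorph.refl X
  inv := Homeomorph.symm
  mul_assoc _ _ _ := rfl
  one_mul _ := Homeomorph.ext fun _ => rfl
  mul_one _ := Homeomorph.ext fun _ => rfl
  inv_mul_cancel := Homeomorph.self_trans_symm

/-- The family of closures of orbits of a subgroup `G` of the homeomorphism group of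
the Alexandroff square. -/
def orbitClosures (G : Subgroup (@Homeomorph (𝕀 × 𝕀) (𝕀 × 𝕀) alexTop alexTop)) :
    Set (Set (𝕀 × 𝕀)) :=
  {S | ∃ x : 𝕀 × 𝕀, S = @closure _ alexTop {y | ∃ g ∈ G, g x = y}}

/-!
A homeomorphism of the Alexandroff square preserves the diagonal, since its points are exactly those
without a countable neighbourhood basis, and maps columns to columns, since off the diagonal the
connected sets are vertical. Hence it preserves the union of the vertical sides and that of the
horizontal sides. These three closed sets divide the square into six strata, which the closures of
orbits of any group of homeomorphisms distinguish.

Conversely, the columns over finitely many points may be moved independently of the others, as long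
as their ends and their points on the diagonal are respected, so the stabiliser of a lower
semicontinuous rank function on the vertical sides still acts transitively on the level sets of the
rank within each stratum, provided the order automorphisms of a side that preserve the rank do. Such
ranks with any number of values arise by iteration: rank the integers lowest in the line and fill
each interval between consecutive integers with a copy of the previous rank.
-/

open Filter Topology unitInterval

section Cardinality

variable {α β γ : Type*}

theorem encard_range_le_of_factorsThrough {f : α → β} {g : α → γ} (h : g.FactorsThrough f) :
    (range g).encard ≤ (range f).encard := by
  rcases isEmpty_or_nonempty α with _ | _
  · simp only [range_eq_empty, encard_empty, le_refl]
  · have hcomp : g = Function.extend f g (fun _ => g (Classical.arbitrary α)) ∘ f :=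
      funext fun a => (h.extend_apply _ a).symm
    rw [hcomp, range_comp]
    exact encard_image_le _ _

theorem encard_range_congr {f : α → β} {g : α → γ} (h : ∀ x y, f x = f y ↔ g x = g y) :
    (range f).encard = (range g).encard :=
  le_antisymm (encard_range_le_of_factorsThrough fun x y => (h x y).2)
    (encard_range_le_of_factorsThrough fun x y => (h x y).1)

theorem finite_and_ncard_eq {s : Set α} {k : ℕ} (h : s.encard = k) : s.Finite ∧ s.ncard = k :=
  ⟨finite_of_encard_eq_coe h, by rw [ncard, h, ENat.toNat_natCast]⟩

end Cardinality

section OrbitClosure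

variable {G X : Type*} [Group G] [MulAction G X] [TopologicalSpace X] {x y : X}

theorem mem_of_closure_orbit_eq {A : Set X} (hA : IsClosed A) (hinv : ∀ g : G, ∀ z ∈ A, g • z ∈ A)
    (h : closure (MulAction.orbit G x) = closure (MulAction.orbit G y)) (hx : x ∈ A) : y ∈ A := by
  have hsub : closure (MulAction.orbit G x) ⊆ A :=
    closure_minimal (by rintro _ ⟨g, rfl⟩; exact hinv g x hx) hA
  exact hsub (h ▸ subset_closure (MulAction.mem_orbit_self y))

theorem mem_iff_of_closure_orbit_eq {A : Set X} (hA : IsClosed A)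
    (hinv : ∀ g : G, ∀ z ∈ A, g • z ∈ A)
    (h : closure (MulAction.orbit G x) = closure (MulAction.orbit G y)) : x ∈ A ↔ y ∈ A :=
  ⟨mem_of_closure_orbit_eq hA hinv h, mem_of_closure_orbit_eq hA hinv h.symm⟩

theorem lowerSemicontinuous_eq_of_closure_orbit_eq {γ : Type*} [LinearOrder γ] {f : X → γ}
    (hf : LowerSemicontinuous f) (hinv : ∀ (g : G) (z : X), f (g • z) = f z)
    (h : closure (MulAction.orbit G x) = closure (MulAction.orbit G y)) : f x = f y := by
  have sublevel (c : γ) : f x ≤ c ↔ f y ≤ c :=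
    mem_iff_of_closure_orbit_eq (hf.isClosed_preimage c) (fun _ z hz => (hinv _ z).trans_le hz) h
  exact le_antisymm ((sublevel _).2 le_rfl) ((sublevel _).1 le_rfl)

variable (G X) in
/-- The family of closures of orbits; the height of the action is its cardinality minus one. -/
def closureOrbits : Set (Set X) := range fun x : X => closure (MulAction.orbit G x)

theorem infinite_closureOrbits [Subsingleton G] [T1Space X] [Infinite X] :
    (closureOrbits G X).Infinite := by
  have hclosure (x : X) : closure (MulAction.orbit G x) = {x} := by
    have horbit : MulAction.orbit G x = {x} := Set.eq_singleton_iff_unique_mem.2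
      ⟨MulAction.mem_orbit_self x, by rintro _ ⟨g, rfl⟩; simp [Subsingleton.elim g 1]⟩
    rw [horbit, closure_singleton]
  rw [closureOrbits, funext hclosure]
  exact infinite_range_of_injective singleton_injective

end OrbitClosure

section HomeomorphAction

variable {X : Type*} [TopologicalSpace X]

instance : MulAction (X ≃ₜ X) X where
  smul g x := g x
  one_smul _ := rfl
  mul_smul _ _ _ := rfl

/-- The group of homeomorphisms that preserve the function `f`. -/
def invarianceSubgroup {γ : Type*} (f : X → γ) : Subgroup (X ≃ₜ X) where
  carrier := {g | ∀ x, f (g x) = f x}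
  mul_mem' {_ h} hg hh x := (hg (h x)).trans (hh x)
  one_mem' _ := rfl
  inv_mem' {g} hg x := (hg (g.symm x)).symm.trans (congrArg f (g.apply_symm_apply x))

theorem mem_orbit_of_mem {G : Subgroup (X ≃ₜ X)} {g : X ≃ₜ X} (hg : g ∈ G) (x : X) :
    g x ∈ MulAction.orbit G x :=
  ⟨⟨g, hg⟩, rfl⟩

end HomeomorphAction

theorem lowerSemicontinuous_extend {X Y γ : Type*} [TopologicalSpace X] [TopologicalSpace Y]
    [LinearOrder γ] [OrderBot γ] {i : X → Y} {f : X → γ} (hi : IsOpenEmbedding i)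
    (hf : LowerSemicontinuous f) : LowerSemicontinuous (Function.extend i f ⊥) := by
  refine lowerSemicontinuous_iff_isOpen_preimage.2 fun c => ?_
  have himage : Function.extend i f ⊥ ⁻¹' Ioi c = i '' (f ⁻¹' Ioi c) := by
    ext y
    by_cases hy : ∃ x, i x = y
    · obtain ⟨x, rfl⟩ := hy
      simp only [mem_preimage, hi.injective.extend_apply, hi.injective.mem_set_image]
    · have hy' : y ∉ i '' (f ⁻¹' Ioi c) := fun ⟨x, _, hx⟩ => hy ⟨x, hx⟩
      simp only [mem_preimage, Function.extend_apply' _ _ _ hy, Pi.bot_apply, mem_Ioi, not_lt_bot,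
        hy']
  exact himage ▸ hi.isOpenMap _ (hf.isOpen_preimage c)

theorem exists_orderIso_map_pair {K : Type*} [Field K] [LinearOrder K] [IsStrictOrderedRing K]
    {a b c d : K} (hab : a < b) (hcd : c < d) : ∃ f : K ≃o K, f a = c ∧ f b = d := by
  have hslope : 0 < (d - c) / (b - a) := div_pos (sub_pos.2 hcd) (sub_pos.2 hab)
  refine ⟨((OrderIso.addRight (-a)).trans (OrderIso.mulRight₀ _ hslope)).trans
    (OrderIso.addRight c), ?_, ?_⟩
  · simp
  · have : b - a ≠ 0 := (sub_pos.2 hab).ne'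
    simp only [OrderIso.trans_apply, OrderIso.addRight_apply, OrderIso.mulRight₀_apply]
    field_simp
    ring

theorem isCountablyGenerated_nhds_homeomorph_iff {X Y : Type*} [TopologicalSpace X]
    [TopologicalSpace Y] (g : X ≃ₜ Y) (x : X) :
    (𝓝 (g x)).IsCountablyGenerated ↔ (𝓝 x).IsCountablyGenerated :=
  ⟨fun _ => g.isInducing.nhds_eq_comap x ▸ inferInstance, fun _ => g.map_nhds_eq x ▸ inferInstance⟩

section UnitInterval

instance : Uncountable 𝕀 :=
  not_countable_iff.1 fun h => (zero_lt_one' ℝ).not_ge (Cardinal.Real.Icc_countable_iff.1 h)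

/-- The two-point compactification of the line, realised as the unit interval so that the real
points are embedded by `unitInterval.sigmoid`. -/
noncomputable def erealOrderIsoUnitInterval : EReal ≃o 𝕀 :=
  ENNReal.logOrderIso.symm.trans ENNReal.orderIsoUnitIntervalBirational

theorem erealOrderIsoUnitInterval_coe (t : ℝ) : erealOrderIsoUnitInterval t = sigmoid t := by
  apply Subtype.ext
  change ((ENNReal.orderIsoUnitIntervalBirational (EReal.exp t) : Icc (0 : ℝ) 1) : ℝ) = _
  rw [EReal.exp_coe, ENNReal.orderIsoUnitIntervalBirational_apply_coe, ENNReal.toReal_inv,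
    ENNReal.toReal_add (ENNReal.inv_ne_top.2 (by simpa using Real.exp_pos t)) ENNReal.one_ne_top,
    ENNReal.toReal_inv, ENNReal.toReal_ofReal (Real.exp_pos t).le, ENNReal.toReal_one,
    ← Real.exp_neg, add_comm]
  rfl

theorem eq_zero_or_one_or_sigmoid (y : 𝕀) : y = 0 ∨ y = 1 ∨ ∃ t, sigmoid t = y := by
  rw [← mem_range, range_sigmoid, mem_Ioo, unitInterval.pos_iff_ne_zero,
    unitInterval.lt_one_iff_ne_one]
  tauto

theorem isOpenEmbedding_sigmoid : IsOpenEmbedding sigmoid :=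
  ⟨isEmbedding_sigmoid, range_sigmoid ▸ isOpen_Ioo⟩

@[simp]
theorem sigmoid_ne_zero (t : ℝ) : sigmoid t ≠ 0 := (unitInterval.sigmoid_pos t).ne'

@[simp]
theorem sigmoid_ne_one (t : ℝ) : sigmoid t ≠ 1 := (unitInterval.sigmoid_lt_one t).ne

theorem orderIso_zero (u : 𝕀 ≃o 𝕀) : u 0 = 0 := u.map_bot

theorem orderIso_one (u : 𝕀 ≃o 𝕀) : u 1 = 1 := u.map_top

/-- The extension of an order automorphism of the line to the unit interval, regarded as its
two-point compactification. -/
noncomputable def compactify (f : ℝ ≃o ℝ) : 𝕀 ≃o 𝕀 :=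
  (erealOrderIsoUnitInterval.symm.trans f.withTopCongr.withBotCongr).trans erealOrderIsoUnitInterval

theorem compactify_sigmoid (f : ℝ ≃o ℝ) (t : ℝ) : compactify f (sigmoid t) = sigmoid (f t) := by
  rw [← erealOrderIsoUnitInterval_coe, ← erealOrderIsoUnitInterval_coe]
  change erealOrderIsoUnitInterval (f.withTopCongr.withBotCongr
    (erealOrderIsoUnitInterval.symm (erealOrderIsoUnitInterval t))) = _
  rw [OrderIso.symm_apply_apply]
  rfl

theorem exists_orderIso_map_pair_unitInterval {x y x' y' : 𝕀}
    (hx : x ∈ Ioo 0 1) (hx' : x' ∈ Ioo 0 1)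
    (hyx : y ≤ x) (hyx' : y' ≤ x') (hzero : y = 0 ↔ y' = 0) (heq : y = x ↔ y' = x') :
    ∃ u : 𝕀 ≃o 𝕀, u x = x' ∧ u y = y' := by
  obtain ⟨s, rfl⟩ := range_sigmoid.ge hx
  obtain ⟨s', rfl⟩ := range_sigmoid.ge hx'
  rcases hyx.eq_or_lt with rfl | hlt
  · obtain rfl : y' = sigmoid s' := heq.1 rfl
    refine ⟨compactify (OrderIso.addRight (s' - s)), ?_, ?_⟩ <;> simp [compactify_sigmoid]
  · have hlt' : y' < sigmoid s' := hyx'.lt_of_ne fun h => hlt.ne (heq.2 h)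
    rcases eq_zero_or_one_or_sigmoid y with rfl | rfl | ⟨t, rfl⟩
    · obtain rfl : y' = 0 := hzero.1 rfl
      refine ⟨compactify (OrderIso.addRight (s' - s)), ?_, orderIso_zero _⟩
      simp [compactify_sigmoid]
    · exact absurd hlt unitInterval.le_one'.not_gt
    · obtain ⟨t', rfl⟩ : ∃ t', sigmoid t' = y' := range_sigmoid.ge
        ⟨unitInterval.pos_iff_ne_zero.2 fun h => sigmoid_ne_zero t (hzero.2 h),
          hlt'.trans (sigmoid_lt_one s')⟩
      obtain ⟨f, hft, hfs⟩ :=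
        exists_orderIso_map_pair (sigmoid_lt_iff.1 hlt) (sigmoid_lt_iff.1 hlt')
      exact ⟨compactify f, by rw [compactify_sigmoid, hfs], by rw [compactify_sigmoid, hft]⟩

theorem isMin_or_isMax_homeomorph_apply_iff {α : Type*} [ConditionallyCompleteLinearOrder α]
    [TopologicalSpace α] [OrderTopology α] [DenselyOrdered α] [BoundedOrder α]
    (f : α ≃ₜ α) (x : α) :
    IsMin (f x) ∨ IsMax (f x) ↔ IsMin x ∨ IsMax x := by
  rcases f.continuous.strictMono_of_inj_boundedOrder' f.injective with hf | hf
  · let e := hf.orderIsoOfSurjective f f.surjective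
    exact or_congr (e.isMin_apply (x := x)) (e.isMax_apply (x := x))
  · let e := StrictMono.orderIsoOfSurjective (OrderDual.toDual ∘ f) hf f.surjective
    rw [or_comm]
    exact or_congr (e.isMin_apply (x := x)) (e.isMax_apply (x := x))

theorem homeomorph_unitInterval_apply_mem_ends_iff (f : 𝕀 ≃ₜ 𝕀) (x : 𝕀) :
    f x = 0 ∨ f x = 1 ↔ x = 0 ∨ x = 1 := by
  have h := isMin_or_isMax_homeomorph_apply_iff f x
  simp only [isMin_iff_eq_bot, isMax_iff_eq_top] at h
  exact h

end UnitInterval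

section Periodization

/-- The fractional part of a real number, as a point of the unit interval. -/
noncomputable def unitFract (t : ℝ) : 𝕀 :=
  ⟨Int.fract t, Int.fract_nonneg t, (Int.fract_lt_one t).le⟩

theorem unitFract_lt_one (t : ℝ) : unitFract t < 1 := Int.fract_lt_one t

theorem unitFract_coe {y : 𝕀} (hy : y < 1) : unitFract y = y :=
  Subtype.ext (Int.fract_eq_self.2 ⟨y.2.1, hy⟩)

theorem unitFract_add_intCast (t : ℝ) (n : ℤ) : unitFract (t + n) = unitFract t :=
  Subtype.ext (Int.fract_add_intCast t n)

theorem floor_add_unitFract (t : ℝ) : (⌊t⌋ : ℝ) + unitFract t = t := Int.floor_add_fract t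

theorem continuousAt_unitFract {t : ℝ} (ht : unitFract t ≠ 0) : ContinuousAt unitFract t := by
  rw [IsInducing.subtypeVal.continuousAt_iff]
  refine continuousAt_fract fun h => ht (Subtype.ext ?_)
  exact sub_eq_zero.2 h

theorem orderIso_unitFract_lt_one (u : 𝕀 ≃o 𝕀) (t : ℝ) : u (unitFract t) < 1 :=
  (u.lt_iff_lt.2 (unitFract_lt_one t)).trans_eq (orderIso_one u)

/-- The map of the line that fixes the integers and acts on the intervals between them as `u`. -/
noncomputable def periodicMap (u : 𝕀 ≃o 𝕀) (t : ℝ) : ℝ := ⌊t⌋ + (u (unitFract t) : ℝ)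

theorem floor_periodicMap (u : 𝕀 ≃o 𝕀) (t : ℝ) : ⌊periodicMap u t⌋ = ⌊t⌋ := by
  rw [periodicMap, Int.floor_intCast_add, add_eq_left, Int.floor_eq_zero_iff]
  exact ⟨(u (unitFract t)).2.1, orderIso_unitFract_lt_one u t⟩

theorem unitFract_periodicMap (u : 𝕀 ≃o 𝕀) (t : ℝ) :
    unitFract (periodicMap u t) = u (unitFract t) := by
  rw [periodicMap, add_comm, unitFract_add_intCast, unitFract_coe (orderIso_unitFract_lt_one u t)]

theorem periodicMap_symm_rightInverse (u : 𝕀 ≃o 𝕀) :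
    Function.RightInverse (periodicMap u.symm) (periodicMap u) := fun t => by
  rw [periodicMap, floor_periodicMap, unitFract_periodicMap, OrderIso.apply_symm_apply,
    floor_add_unitFract]

theorem periodicMap_strictMono (u : 𝕀 ≃o 𝕀) : StrictMono (periodicMap u) := by
  intro s t hst
  rcases (Int.floor_mono hst.le).lt_or_eq with hfloor | hfloor
  · calc periodicMap u s < ⌊s⌋ + 1 := by
          rw [← floor_periodicMap u s]; exact Int.lt_floor_add_one _
      _ ≤ ⌊t⌋ := by exact_mod_cast hfloor
      _ ≤ periodicMap u t := by
          rw [← floor_periodicMap u t]; exact Int.floor_le _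
  · have hfract : unitFract s < unitFract t := Subtype.coe_lt_coe.1 <| by
      change s - ⌊s⌋ < t - ⌊t⌋
      rw [hfloor]
      exact sub_lt_sub_right hst _
    rw [periodicMap, periodicMap, hfloor]
    exact add_lt_add_right (Subtype.coe_lt_coe.2 (u.lt_iff_lt.2 hfract)) _

/-- `periodicMap u` as an order automorphism of the line. -/
noncomputable def periodize (u : 𝕀 ≃o 𝕀) : ℝ ≃o ℝ :=
  (periodicMap_strictMono u).orderIsoOfRightInverse _ _ (periodicMap_symm_rightInverse u)

end Periodization

section Rank

/-- `ρ` takes exactly the values `0, …, m`, and its level sets are the orbits of the group of order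
automorphisms preserving `ρ`. Semicontinuity makes the closures of these orbits distinguishable. -/
structure IsHomogeneousRank {L : Type*} [TopologicalSpace L] [LE L] (ρ : L → ℕ) (m : ℕ) :
    Prop where
  lowerSemicontinuous : LowerSemicontinuous ρ
  range_eq : range ρ = Iic m
  exists_orderIso : ∀ {s t : L}, ρ s = ρ t → ∃ f : L ≃o L, f s = t ∧ ∀ x, ρ (f x) = ρ x

/-- The extension by zero to the unit interval of a function on the line, regarded as the open
unit interval. -/
noncomputable def unitRank (ρ : ℝ → ℕ) : 𝕀 → ℕ := Function.extend sigmoid ρ 0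

@[simp]
theorem unitRank_sigmoid (ρ : ℝ → ℕ) (t : ℝ) : unitRank ρ (sigmoid t) = ρ t :=
  sigmoid_injective.extend_apply _ _ _

@[simp]
theorem unitRank_zero (ρ : ℝ → ℕ) : unitRank ρ 0 = 0 :=
  Function.extend_apply' _ _ _ fun ⟨t, ht⟩ => sigmoid_ne_zero t ht

@[simp]
theorem unitRank_one (ρ : ℝ → ℕ) : unitRank ρ 1 = 0 :=
  Function.extend_apply' _ _ _ fun ⟨t, ht⟩ => sigmoid_ne_one t ht

theorem lowerSemicontinuous_unitRank {ρ : ℝ → ℕ} (hρ : LowerSemicontinuous ρ) :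
    LowerSemicontinuous (unitRank ρ) :=
  lowerSemicontinuous_extend isOpenEmbedding_sigmoid hρ

theorem unitRank_compactify {ρ : ℝ → ℕ} {f : ℝ ≃o ℝ} (hf : ∀ x, ρ (f x) = ρ x) (y : 𝕀) :
    unitRank ρ (compactify f y) = unitRank ρ y := by
  rcases eq_zero_or_one_or_sigmoid y with rfl | rfl | ⟨t, rfl⟩
  · rw [orderIso_zero]
  · rw [orderIso_one]
  · rw [compactify_sigmoid, unitRank_sigmoid, unitRank_sigmoid, hf]

/-- One step of the construction of homogeneous ranks: the integers get rank `0`, and each interval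
between consecutive integers carries a copy of `ρ + 1`. -/
noncomputable def periodicRank (ρ : ℝ → ℕ) (t : ℝ) : ℕ := unitRank (fun s => ρ s + 1) (unitFract t)

theorem lowerSemicontinuous_periodicRank {ρ : ℝ → ℕ} (hρ : LowerSemicontinuous ρ) :
    LowerSemicontinuous (periodicRank ρ) := by
  intro t
  by_cases ht : unitFract t = 0
  · intro c hc
    simp [periodicRank, ht] at hc
  · have hsucc : LowerSemicontinuous fun s => ρ s + 1 := hρ.add lowerSemicontinuous_const
    exact (lowerSemicontinuous_unitRank hsucc (unitFract t)).comp (continuousAt_unitFract ht)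

theorem range_periodicRank {ρ : ℝ → ℕ} {m : ℕ} (hρ : range ρ = Iic m) :
    range (periodicRank ρ) = Iic (m + 1) := by
  ext j
  constructor
  · rintro ⟨t, rfl⟩
    rcases eq_zero_or_one_or_sigmoid (unitFract t) with h | h | ⟨s, h⟩
    · simp [periodicRank, h]
    · simp [periodicRank, h]
    · have hs : ρ s ≤ m := hρ.le (mem_range_self s)
      simpa [periodicRank, ← h] using hs
  · intro hj
    rcases j with _ | j
    · exact ⟨(0 : 𝕀), by rw [periodicRank, unitFract_coe zero_lt_one, unitRank_zero]⟩
    · obtain ⟨s, rfl⟩ : j ∈ range ρ := hρ.ge (Nat.le_of_succ_le_succ hj)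
      exact ⟨sigmoid s, by
        rw [periodicRank, unitFract_coe (sigmoid_lt_one s), unitRank_sigmoid]⟩

theorem IsHomogeneousRank.exists_orderIso_unitInterval {ρ : ℝ → ℕ} {m : ℕ}
    (hρ : IsHomogeneousRank ρ m) {s t : ℝ} (hst : ρ s = ρ t) :
    ∃ u : 𝕀 ≃o 𝕀, u (sigmoid s) = sigmoid t ∧ ∀ y, unitRank ρ (u y) = unitRank ρ y := by
  obtain ⟨f, hf, hinv⟩ := hρ.exists_orderIso hst
  exact ⟨compactify f, by rw [compactify_sigmoid, hf], unitRank_compactify hinv⟩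

theorem IsHomogeneousRank.exists_orderIso_unitFract {ρ : ℝ → ℕ} {m : ℕ}
    (hρ : IsHomogeneousRank ρ m) {s t : ℝ} (hst : periodicRank ρ s = periodicRank ρ t) :
    ∃ u : 𝕀 ≃o 𝕀, u (unitFract s) = unitFract t ∧
      ∀ y, unitRank (fun x => ρ x + 1) (u y) = unitRank (fun x => ρ x + 1) y := by
  rw [periodicRank, periodicRank] at hst
  rcases eq_zero_or_one_or_sigmoid (unitFract s) with hs | hs | ⟨s', hs⟩
  · rcases eq_zero_or_one_or_sigmoid (unitFract t) with ht | ht | ⟨t', ht⟩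
    · exact ⟨OrderIso.refl 𝕀, hs.trans ht.symm, fun _ => rfl⟩
    · exact absurd ht (unitFract_lt_one t).ne
    · simp [hs, ← ht] at hst
  · exact absurd hs (unitFract_lt_one s).ne
  · rcases eq_zero_or_one_or_sigmoid (unitFract t) with ht | ht | ⟨t', ht⟩
    · simp [← hs, ht] at hst
    · exact absurd ht (unitFract_lt_one t).ne
    · rw [← hs, ← ht, unitRank_sigmoid, unitRank_sigmoid, Nat.add_right_cancel_iff] at hst
      obtain ⟨f, hf, hinv⟩ := hρ.exists_orderIso hst
      exact ⟨compactify f, by rw [← hs, ← ht, compactify_sigmoid, hf],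
        unitRank_compactify fun x => congrArg (· + 1) (hinv x)⟩

theorem IsHomogeneousRank.succ {ρ : ℝ → ℕ} {m : ℕ} (hρ : IsHomogeneousRank ρ m) :
    IsHomogeneousRank (periodicRank ρ) (m + 1) where
  lowerSemicontinuous := lowerSemicontinuous_periodicRank hρ.lowerSemicontinuous
  range_eq := range_periodicRank hρ.range_eq
  exists_orderIso {s t} hst := by
    obtain ⟨u, hu, hinv⟩ := hρ.exists_orderIso_unitFract hst
    refine ⟨(periodize u).trans (OrderIso.addRight ((⌊t⌋ - ⌊s⌋ : ℤ) : ℝ)), ?_, fun x => ?_⟩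
    · change ⌊s⌋ + (u (unitFract s) : ℝ) + ((⌊t⌋ - ⌊s⌋ : ℤ) : ℝ) = t
      rw [hu]
      push_cast
      linarith [floor_add_unitFract t]
    · change unitRank _ (unitFract (periodicMap u x + ((⌊t⌋ - ⌊s⌋ : ℤ) : ℝ))) = _
      rw [unitFract_add_intCast, unitFract_periodicMap, hinv]
      rfl

theorem isHomogeneousRank_zero : IsHomogeneousRank (0 : ℝ → ℕ) 0 where
  lowerSemicontinuous := lowerSemicontinuous_const
  range_eq := by rw [Pi.zero_def, range_const]; exact Iic_bot.symm
  exists_orderIso {s t} _ := ⟨OrderIso.addRight (t - s), add_sub_cancel s t, fun _ => rfl⟩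

theorem exists_isHomogeneousRank (m : ℕ) : ∃ ρ : ℝ → ℕ, IsHomogeneousRank ρ m := by
  induction m with
  | zero => exact ⟨0, isHomogeneousRank_zero⟩
  | succ m ih =>
    obtain ⟨ρ, hρ⟩ := ih
    exact ⟨periodicRank ρ, hρ.succ⟩

end Rank

/-- The unit square, as a type synonym on which the Alexandroff topology `alexTop` is an instance
not competing with the product topology. -/
def AlexandroffSquare : Type := 𝕀 × 𝕀

namespace AlexandroffSquare

instance : TopologicalSpace AlexandroffSquare := alexTop

/-- The point of the Alexandroff square with the given coordinates. -/
def mk (x y : 𝕀) : AlexandroffSquare := (x, y)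

/-- The first coordinate of a point of the Alexandroff square. -/
def fst (p : AlexandroffSquare) : 𝕀 := Prod.fst p

/-- The second coordinate of a point of the Alexandroff square. -/
def snd (p : AlexandroffSquare) : 𝕀 := Prod.snd p

@[simp]
theorem fst_mk (x y : 𝕀) : (mk x y).fst = x := rfl

@[simp]
theorem snd_mk (x y : 𝕀) : (mk x y).snd = y := rfl

@[simp]
theorem mk_fst_snd (p : AlexandroffSquare) : mk p.fst p.snd = p := rfl

@[ext]
protected theorem ext {p q : AlexandroffSquare} (hfst : p.fst = q.fst) (hsnd : p.snd = q.snd) :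
    p = q := Prod.ext hfst hsnd

instance : Infinite AlexandroffSquare := Infinite.of_surjective snd fun y => ⟨mk 0 y, rfl⟩

section Topology

theorem continuous_iff {Y : Type*} [TopologicalSpace Y] {f : Y → AlexandroffSquare} :
    Continuous f ↔
      (∀ (c : 𝕀) (U : Set 𝕀), IsOpen U → c ∉ U → IsOpen {y | (f y).fst = c ∧ (f y).snd ∈ U}) ∧
      ∀ U F : Set 𝕀, IsOpen U → F.Finite → IsOpen {y | (f y).snd ∈ U ∧ (f y).fst ∉ F} := by
  have box (U F : Set 𝕀) :
      f ⁻¹' ((univ ×ˢ U) \ (F ×ˢ univ)) = {y | (f y).snd ∈ U ∧ (f y).fst ∉ F} := by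
    ext y
    change ((True ∧ (f y).snd ∈ U) ∧ ¬((f y).fst ∈ F ∧ True)) ↔ _
    rw [true_and, and_true]
    rfl
  refine continuous_generateFrom_iff.trans ⟨fun h => ⟨fun c U hU hc => ?_, fun U F hU hF => ?_⟩, ?_⟩
  · exact h _ (Or.inl ⟨c, U, hU, hc, rfl⟩)
  · exact box U F ▸ h _ (Or.inr ⟨U, F, hU, hF, rfl⟩)
  · rintro ⟨hcol, hbox⟩ _ (⟨c, U, hU, hc, rfl⟩ | ⟨U, F, hU, hF, rfl⟩)
    · exact hcol c U hU hc
    · exact box U F ▸ hbox U F hU hF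

theorem isOpen_setOf_fst_eq_and_snd_mem {c : 𝕀} {U : Set 𝕀} (hU : IsOpen U) (hc : c ∉ U) :
    IsOpen {p : AlexandroffSquare | p.fst = c ∧ p.snd ∈ U} :=
  (continuous_iff.1 continuous_id).1 c U hU hc

theorem isOpen_setOf_snd_mem_and_fst_notMem {U F : Set 𝕀} (hU : IsOpen U) (hF : F.Finite) :
    IsOpen {p : AlexandroffSquare | p.snd ∈ U ∧ p.fst ∉ F} :=
  (continuous_iff.1 continuous_id).2 U F hU hF

theorem continuous_snd : Continuous snd := by
  refine continuous_def.2 fun U hU => ?_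
  convert isOpen_setOf_snd_mem_and_fst_notMem hU finite_empty using 1
  ext p
  exact (and_iff_left (notMem_empty p.fst)).symm

theorem continuous_mk (c : 𝕀) : Continuous (mk c) :=
  continuous_iff.2
    ⟨fun x _ hU _ => (isOpen_const (p := c = x)).and hU,
      fun _ F hU _ => hU.and (isOpen_const (p := c ∉ F))⟩

theorem continuous_mk_self : Continuous fun x => mk x x := by
  refine continuous_iff.2 ⟨fun x U _ hx => ?_, fun U F hU hF => hU.inter hF.isClosed.isOpen_compl⟩
  convert isOpen_empty
  exact eq_empty_of_forall_notMem fun y ⟨hyx, hy⟩ => hx (hyx ▸ hy)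

theorem isClosed_setOf_fst_eq (c : 𝕀) : IsClosed {p : AlexandroffSquare | p.fst = c} := by
  refine ⟨?_⟩
  convert isOpen_setOf_snd_mem_and_fst_notMem isOpen_univ (finite_singleton c) using 1
  ext p
  exact (and_iff_right (mem_univ p.snd)).symm

theorem isOpen_setOf_fst_eq_and_ne (c : 𝕀) :
    IsOpen {p : AlexandroffSquare | p.fst = c ∧ p.snd ≠ c} :=
  isOpen_setOf_fst_eq_and_snd_mem isOpen_compl_singleton (by simp)

theorem isClosed_diagonal : IsClosed {p : AlexandroffSquare | p.fst = p.snd} := by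
  refine ⟨isOpen_iff_mem_nhds.2 fun p hp => ?_⟩
  refine mem_of_superset ((isOpen_setOf_fst_eq_and_ne p.fst).mem_nhds ⟨rfl, Ne.symm hp⟩) ?_
  rintro q ⟨hq, hne⟩ hdiag
  exact hne (hdiag.symm.trans hq)

instance : T1Space AlexandroffSquare where
  t1 p := by
    have hp : {p} = {q : AlexandroffSquare | q.fst = p.fst} ∩ {q | q.snd = p.snd} :=
      Set.ext fun q => AlexandroffSquare.ext_iff
    exact hp ▸ (isClosed_setOf_fst_eq p.fst).inter (isClosed_singleton.preimage continuous_snd)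

theorem nhds_mk_of_ne {x y : 𝕀} (hxy : x ≠ y) : 𝓝 (mk x y) = map (mk x) (𝓝 y) := by
  have hemb : IsInducing (mk x) :=
    (Topology.IsEmbedding.of_leftInverse (fun _ => rfl) continuous_snd (continuous_mk x)).isInducing
  refine (hemb.map_nhds_of_mem y ?_).symm
  refine mem_of_superset ((isOpen_setOf_fst_eq_and_ne x).mem_nhds ⟨rfl, hxy.symm⟩) ?_
  rintro ⟨_, z⟩ ⟨rfl, _⟩
  exact mem_range_self z

theorem nhds_mk_self (x : 𝕀) :
    𝓝 (mk x x) = comap snd (𝓝 x) ⊓ comap fst (cofinite ⊔ pure x) := by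
  apply le_antisymm
  · refine le_inf continuous_snd.continuousAt.le_comap ?_
    rintro S ⟨T, ⟨hT, hxT⟩, hTS⟩
    refine mem_of_superset ((isOpen_setOf_snd_mem_and_fst_notMem isOpen_univ hT).mem_nhds
      ⟨mem_univ x, fun h => h hxT⟩) ?_
    exact fun p hp => hTS (notMem_compl_iff.1 hp.2)
  · refine (tendsto_id' (x := _)).1 (TopologicalSpace.tendsto_nhds_generateFrom_iff.2 ?_)
    rintro _ (⟨c, U, _, hc, rfl⟩ | ⟨U, F, hU, hF, rfl⟩) ⟨hx, hx'⟩
    · exact absurd (mem_singleton_iff.1 hx ▸ hx') hc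
    · have hfst : Fᶜ ∈ cofinite ⊔ pure x :=
        ⟨hF.compl_mem_cofinite, fun h => hx' ⟨h, mem_univ x⟩⟩
      filter_upwards [inter_mem_inf (preimage_mem_comap (hU.mem_nhds hx.2))
        (preimage_mem_comap hfst)] with p hp
      exact ⟨⟨mem_univ _, hp.1⟩, fun h => hp.2 h.1⟩

theorem tendsto_row_cofinite (x : 𝕀) : Tendsto (fun c => mk c x) cofinite (𝓝 (mk x x)) := by
  rw [nhds_mk_self, tendsto_inf, tendsto_comap_iff, tendsto_comap_iff]
  exact ⟨tendsto_const_nhds, tendsto_id.mono_right le_sup_left⟩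

end Topology

section Rigidity

theorem isCountablyGenerated_nhds_mk_iff {x y : 𝕀} :
    (𝓝 (mk x y)).IsCountablyGenerated ↔ x ≠ y := by
  refine ⟨?_, fun hxy => (nhds_mk_of_ne hxy).symm ▸ inferInstance⟩
  rintro hgen rfl
  have hker : (fun c => mk c x) ⁻¹' (𝓝 (mk x x)).ker = {x} := by
    rw [ker_nhds]
    exact Set.ext fun c => ⟨fun h => congrArg fst h, fun h => congrArg (mk · x) h⟩
  have hcount : ({x}ᶜ : Set 𝕀).Countable :=
    hker ▸ (tendsto_row_cofinite x).countable_compl_preimage_ker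
  exact not_countable_univ (union_compl_self {x} ▸ (countable_singleton x).union hcount)

theorem apply_fst_eq_snd_iff (g : AlexandroffSquare ≃ₜ AlexandroffSquare) (p : AlexandroffSquare) :
    (g p).fst = (g p).snd ↔ p.fst = p.snd := by
  refine not_iff_not.1 ((isCountablyGenerated_nhds_mk_iff (x := (g p).fst)).symm.trans
    (Iff.trans ?_ (isCountablyGenerated_nhds_mk_iff (x := p.fst))))
  exact isCountablyGenerated_nhds_homeomorph_iff g p

theorem fst_eq_of_mem_closure {Y : Type*} [TopologicalSpace Y] {φ : Y → AlexandroffSquare}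
    (hφ : Continuous φ) {s : Set Y} (hs : IsPreconnected s) (hoff : ∀ y ∈ s, (φ y).fst ≠ (φ y).snd)
    {y z : Y} (hy : y ∈ s) (hz : z ∈ closure s) : (φ z).fst = (φ y).fst := by
  have hconst (w : Y) (hw : w ∈ s) : (φ w).fst = (φ y).fst := by
    refine hs.induction₂ (fun v w => (φ w).fst = (φ v).fst) (fun v hv => ?_)
      (fun _ _ _ _ _ _ h h' => h'.trans h) (fun _ _ _ _ h => h.symm) hy hw
    filter_upwards [nhdsWithin_le_nhds <| hφ.continuousAt.eventually
      ((isOpen_setOf_fst_eq_and_ne (φ v).fst).mem_nhds ⟨rfl, (hoff v hv).symm⟩)] with w hw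
    exact hw.1
  exact closure_minimal hconst ((isClosed_setOf_fst_eq _).preimage hφ) hz

theorem apply_mk_fst (g : AlexandroffSquare ≃ₜ AlexandroffSquare) (x y : 𝕀) :
    (g (mk x y)).fst = (g (mk x x)).snd := by
  have hoff {y : 𝕀} (hy : y ≠ x) : (g (mk x y)).fst ≠ (g (mk x y)).snd :=
    (apply_fst_eq_snd_iff g _).not.2 hy.symm
  have hcont : Continuous fun y => g (mk x y) := g.continuous.comp (continuous_mk x)
  rw [← (apply_fst_eq_snd_iff g (mk x x)).2 rfl]
  rcases lt_trichotomy y x with hy | rfl | hy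
  · exact (fst_eq_of_mem_closure hcont isPreconnected_Iio (fun _ h => hoff h.ne) hy
      (closure_Iio' ⟨y, hy⟩ ▸ self_mem_Iic)).symm
  · rfl
  · exact (fst_eq_of_mem_closure hcont isPreconnected_Ioi (fun _ h => hoff h.ne') hy
      (closure_Ioi' ⟨y, hy⟩ ▸ self_mem_Ici)).symm

theorem apply_mk (g : AlexandroffSquare ≃ₜ AlexandroffSquare) (x y : 𝕀) :
    g (mk x y) = mk (g (mk x x)).snd (g (mk x y)).snd :=
  AlexandroffSquare.ext (apply_mk_fst g x y) rfl

theorem symm_mk_apply (g : AlexandroffSquare ≃ₜ AlexandroffSquare) (x y : 𝕀) :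
    g.symm (mk (g (mk x x)).snd (g (mk x y)).snd) = mk x y := by
  rw [← apply_mk, Homeomorph.symm_apply_apply]

/-- The homeomorphism of the unit interval by which `g` permutes the columns of the square. -/
def baseHomeo (g : AlexandroffSquare ≃ₜ AlexandroffSquare) : 𝕀 ≃ₜ 𝕀 where
  toFun x := (g (mk x x)).snd
  invFun x := (g.symm (mk x x)).snd
  left_inv x := congrArg snd (symm_mk_apply g x x)
  right_inv x := congrArg snd (symm_mk_apply g.symm x x)
  continuous_toFun := continuous_snd.comp (g.continuous.comp continuous_mk_self)
  continuous_invFun := continuous_snd.comp (g.symm.continuous.comp continuous_mk_self)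

/-- The homeomorphism of the unit interval by which `g` maps the column over `x` to its image. -/
def columnHomeo (g : AlexandroffSquare ≃ₜ AlexandroffSquare) (x : 𝕀) : 𝕀 ≃ₜ 𝕀 where
  toFun y := (g (mk x y)).snd
  invFun y := (g.symm (mk (baseHomeo g x) y)).snd
  left_inv y := congrArg snd (symm_mk_apply g x y)
  right_inv y := by
    have h := symm_mk_apply g.symm (baseHomeo g x) y
    rw [show (g.symm (mk (baseHomeo g x) (baseHomeo g x))).snd = x from
      (baseHomeo g).symm_apply_apply x] at h
    exact congrArg snd h
  continuous_toFun := continuous_snd.comp (g.continuous.comp (continuous_mk x))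
  continuous_invFun := continuous_snd.comp (g.symm.continuous.comp (continuous_mk _))

theorem apply_fst_mem_ends_iff (g : AlexandroffSquare ≃ₜ AlexandroffSquare)
    (p : AlexandroffSquare) : (g p).fst = 0 ∨ (g p).fst = 1 ↔ p.fst = 0 ∨ p.fst = 1 := by
  have hbase : (g p).fst = baseHomeo g p.fst := apply_mk_fst g p.fst p.snd
  rw [hbase]
  exact homeomorph_unitInterval_apply_mem_ends_iff _ _

theorem apply_snd_mem_ends_iff (g : AlexandroffSquare ≃ₜ AlexandroffSquare)
    (p : AlexandroffSquare) : (g p).snd = 0 ∨ (g p).snd = 1 ↔ p.snd = 0 ∨ p.snd = 1 :=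
  homeomorph_unitInterval_apply_mem_ends_iff (columnHomeo g p.fst) p.snd

end Rigidity

section Construction

variable {b : 𝕀 ≃ₜ 𝕀} {k : 𝕀 → 𝕀 ≃ₜ 𝕀}

theorem tendsto_columns_nhds_mk_self (hdiag : ∀ x, k x x = b x) (hk : ∀ᶠ x in cofinite, k x = b)
    (x : 𝕀) :
    Tendsto (fun p : AlexandroffSquare => mk (b p.fst) (k p.fst p.snd)) (𝓝 (mk x x))
      (𝓝 (mk (b x) (b x))) := by
  rw [nhds_mk_self, nhds_mk_self, tendsto_inf, tendsto_comap_iff, tendsto_comap_iff]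
  constructor
  · intro U hU
    have hsnd : b ⁻¹' U ∩ k x ⁻¹' U ∈ 𝓝 x :=
      inter_mem (b.continuous.continuousAt hU) ((k x).continuous.continuousAt (hdiag x ▸ hU))
    have hfst : {c | k c = b ∨ c = x} ∈ cofinite ⊔ pure x :=
      ⟨hk.mono fun _ h => Or.inl h, Or.inr rfl⟩
    refine mem_map.2 (mem_of_superset
      (inter_mem_inf (preimage_mem_comap hsnd) (preimage_mem_comap hfst)) ?_)
    rintro p ⟨⟨hbU, hkU⟩, heq | heq⟩
    · change k p.fst p.snd ∈ U
      exact heq ▸ hbU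
    · change k p.fst p.snd ∈ U
      exact heq ▸ hkU
  · exact ((b.injective.tendsto_cofinite.sup_sup (tendsto_pure_pure b x)).comp
      tendsto_comap).mono_left inf_le_right

theorem continuous_columns (hdiag : ∀ x, k x x = b x) (hk : ∀ᶠ x in cofinite, k x = b) :
    Continuous fun p : AlexandroffSquare => mk (b p.fst) (k p.fst p.snd) := by
  refine continuous_iff_continuousAt.2 fun p => ?_
  obtain ⟨x, y, rfl⟩ : ∃ x y, p = mk x y := ⟨p.fst, p.snd, rfl⟩
  rcases eq_or_ne x y with rfl | hxy
  · have hx : mk (b x) (k x x) = mk (b x) (b x) := by rw [hdiag]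
    exact (tendsto_columns_nhds_mk_self hdiag hk x).trans_eq (congrArg 𝓝 hx.symm)
  · rw [ContinuousAt, nhds_mk_of_ne hxy, tendsto_map'_iff]
    exact ((continuous_mk _).comp (k x).continuous).continuousAt

/-- The homeomorphism of the Alexandroff square that permutes the columns by `b` and maps the column
over `x` by `k x`. -/
def ofColumns (b : 𝕀 ≃ₜ 𝕀) (k : 𝕀 → 𝕀 ≃ₜ 𝕀) (hdiag : ∀ x, k x x = b x)
    (hk : ∀ᶠ x in cofinite, k x = b) : AlexandroffSquare ≃ₜ AlexandroffSquare where
  toFun p := mk (b p.fst) (k p.fst p.snd)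
  invFun p := mk (b.symm p.fst) ((k (b.symm p.fst)).symm p.snd)
  left_inv p := by
    simp only [fst_mk, snd_mk, Homeomorph.symm_apply_apply, mk_fst_snd]
  right_inv p := by
    simp only [fst_mk, snd_mk, Homeomorph.apply_symm_apply, mk_fst_snd]
  continuous_toFun := continuous_columns hdiag hk
  continuous_invFun := by
    refine continuous_columns (b := b.symm) (k := fun x => (k (b.symm x)).symm) (fun x => ?_) ?_
    · rw [Homeomorph.symm_apply_eq, hdiag, Homeomorph.apply_symm_apply]
    · filter_upwards [b.symm.injective.tendsto_cofinite.eventually hk] with x hx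
      rw [hx]

@[simp]
theorem ofColumns_mk (hdiag : ∀ x, k x x = b x) (hk : ∀ᶠ x in cofinite, k x = b) (x y : 𝕀) :
    ofColumns b k hdiag hk (mk x y) = mk (b x) (k x y) := rfl

/-- The point reflection of the square in its centre. -/
def reflection : AlexandroffSquare ≃ₜ AlexandroffSquare :=
  ofColumns unitInterval.symmHomeomorph (fun _ => unitInterval.symmHomeomorph) (fun _ => rfl)
    (Eventually.of_forall fun _ => rfl)

theorem reflection_mk (x y : 𝕀) : reflection (mk x y) = mk (σ x) (σ y) := rfl

/-- The action of `move u v` on the column over `x`. -/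
noncomputable def moveColumn (u v : 𝕀 ≃o 𝕀) (x : 𝕀) : 𝕀 ≃ₜ 𝕀 :=
  if x = 0 then v.toHomeomorph else if x = 1 then Homeomorph.refl 𝕀 else u.toHomeomorph

theorem moveColumn_self (u v : 𝕀 ≃o 𝕀) (x : 𝕀) : moveColumn u v x x = u.toHomeomorph x := by
  unfold moveColumn
  split_ifs with h0 h1
  · exact h0 ▸ (orderIso_zero v).trans (orderIso_zero u).symm
  · exact h1 ▸ (orderIso_one u).symm
  · rfl

theorem eventually_moveColumn_eq (u v : 𝕀 ≃o 𝕀) :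
    ∀ᶠ x in cofinite, moveColumn u v x = u.toHomeomorph := by
  filter_upwards [(finite_singleton (0 : 𝕀)).eventually_cofinite_notMem,
    (finite_singleton (1 : 𝕀)).eventually_cofinite_notMem] with x h0 h1
  exact (if_neg h0).trans (if_neg h1)

/-- The homeomorphism of the square that acts by `v` on the left side, trivially on the right side,
and by `u` on both coordinates in between. -/
noncomputable def move (u v : 𝕀 ≃o 𝕀) : AlexandroffSquare ≃ₜ AlexandroffSquare :=
  ofColumns u.toHomeomorph (moveColumn u v) (moveColumn_self u v) (eventually_moveColumn_eq u v)

theorem move_mk_zero (u v : 𝕀 ≃o 𝕀) (y : 𝕀) : move u v (mk 0 y) = mk 0 (v y) := by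
  simp [move, moveColumn, orderIso_zero]

theorem move_mk_one (u v : 𝕀 ≃o 𝕀) (y : 𝕀) : move u v (mk 1 y) = mk 1 y := by
  simp [move, moveColumn, orderIso_one]

theorem move_mk (u v : 𝕀 ≃o 𝕀) {x : 𝕀} (h0 : x ≠ 0) (h1 : x ≠ 1) (y : 𝕀) :
    move u v (mk x y) = mk (u x) (u y) := by
  simp [move, moveColumn, h0, h1]

end Construction

section Invariants

/-- The position of a point relative to the closed sets preserved by every homeomorphism: whether
it lies on the union of the vertical sides, on that of the horizontal sides, on the diagonal. -/
noncomputable def stratum (p : AlexandroffSquare) : Bool × Bool × Bool :=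
  (decide (p.fst = 0 ∨ p.fst = 1), decide (p.snd = 0 ∨ p.snd = 1), decide (p.fst = p.snd))

theorem stratum_eq_stratum_iff {p q : AlexandroffSquare} : stratum p = stratum q ↔
    (p.fst = 0 ∨ p.fst = 1 ↔ q.fst = 0 ∨ q.fst = 1) ∧
    (p.snd = 0 ∨ p.snd = 1 ↔ q.snd = 0 ∨ q.snd = 1) ∧ (p.fst = p.snd ↔ q.fst = q.snd) := by
  simp only [stratum, Prod.mk.injEq, decide_eq_decide]

theorem stratum_apply (g : AlexandroffSquare ≃ₜ AlexandroffSquare) (p : AlexandroffSquare) :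
    stratum (g p) = stratum p :=
  stratum_eq_stratum_iff.2
    ⟨apply_fst_mem_ends_iff g p, apply_snd_mem_ends_iff g p, apply_fst_eq_snd_iff g p⟩

theorem stratum_eq_of_closure_orbit_eq {G : Subgroup (AlexandroffSquare ≃ₜ AlexandroffSquare)}
    {p q : AlexandroffSquare}
    (h : closure (MulAction.orbit G p) = closure (MulAction.orbit G q)) :
    stratum p = stratum q := by
  have hhoriz (c : 𝕀) : IsClosed {p : AlexandroffSquare | p.snd = c} :=
    (isClosed_singleton (x := c)).preimage continuous_snd
  refine stratum_eq_stratum_iff.2 ⟨?_, ?_, ?_⟩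
  · exact mem_iff_of_closure_orbit_eq ((isClosed_setOf_fst_eq 0).union (isClosed_setOf_fst_eq 1))
      (fun (g : G) z => (apply_fst_mem_ends_iff g z).2) h
  · exact mem_iff_of_closure_orbit_eq ((hhoriz 0).union (hhoriz 1))
      (fun (g : G) z => (apply_snd_mem_ends_iff g z).2) h
  · exact mem_iff_of_closure_orbit_eq isClosed_diagonal
      (fun (g : G) z => (apply_fst_eq_snd_iff g z).2) h

/-- The rank `unitRank ρ` placed on the two vertical sides so that the point reflection preserves
it, extended by zero. -/
noncomputable def sideRank (ρ : ℝ → ℕ) (p : AlexandroffSquare) : ℕ :=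
  if p.fst = 0 then unitRank ρ p.snd else if p.fst = 1 then unitRank ρ (σ p.snd) else 0

@[simp]
theorem sideRank_mk_zero (ρ : ℝ → ℕ) (y : 𝕀) : sideRank ρ (mk 0 y) = unitRank ρ y := if_pos rfl

@[simp]
theorem sideRank_mk_one (ρ : ℝ → ℕ) (y : 𝕀) : sideRank ρ (mk 1 y) = unitRank ρ (σ y) :=
  (if_neg one_ne_zero).trans (if_pos rfl)

theorem sideRank_mk (ρ : ℝ → ℕ) {x : 𝕀} (h0 : x ≠ 0) (h1 : x ≠ 1) (y : 𝕀) :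
    sideRank ρ (mk x y) = 0 :=
  (if_neg h0).trans (if_neg h1)

theorem sideRank_zero (p : AlexandroffSquare) : sideRank 0 p = 0 := by
  have hunit (y : 𝕀) : unitRank 0 y = 0 := congrFun (Function.extend_zero sigmoid) y
  unfold sideRank
  split_ifs <;> first | exact hunit _ | rfl

theorem invarianceSubgroup_sideRank_zero : invarianceSubgroup (sideRank 0) = ⊤ :=
  (Subgroup.eq_top_iff' _).2 fun _ _ => (sideRank_zero _).trans (sideRank_zero _).symm

theorem lowerSemicontinuous_sideRank {ρ : ℝ → ℕ} (hρ : LowerSemicontinuous ρ) :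
    LowerSemicontinuous (sideRank ρ) := by
  refine lowerSemicontinuous_iff_isOpen_preimage.2 fun c => ?_
  have hunit : IsOpen {y | c < unitRank ρ y} := (lowerSemicontinuous_unitRank hρ).isOpen_preimage c
  have hpre : sideRank ρ ⁻¹' Ioi c =
      {p | p.fst = 0 ∧ p.snd ∈ {y | c < unitRank ρ y}} ∪
        {p | p.fst = 1 ∧ p.snd ∈ σ ⁻¹' {y | c < unitRank ρ y}} := by
    ext p
    change c < sideRank ρ p ↔ p.fst = 0 ∧ c < unitRank ρ p.snd ∨
      p.fst = 1 ∧ c < unitRank ρ (σ p.snd)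
    unfold sideRank
    split_ifs with h0 h1 <;> simp_all
  rw [hpre]
  refine (isOpen_setOf_fst_eq_and_snd_mem hunit ?_).union
    (isOpen_setOf_fst_eq_and_snd_mem (hunit.preimage unitInterval.continuous_symm) ?_)
  · exact fun h => Nat.not_lt_zero c (unitRank_zero ρ ▸ h)
  · exact fun h => Nat.not_lt_zero c (unitRank_zero ρ ▸ unitInterval.symm_one ▸ h)

end Invariants

section Orbits

variable {ρ : ℝ → ℕ} {p q : AlexandroffSquare}

theorem reflection_mem (ρ : ℝ → ℕ) : reflection ∈ invarianceSubgroup (sideRank ρ) := by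
  intro p
  obtain ⟨x, y, rfl⟩ : ∃ x y, p = mk x y := ⟨p.fst, p.snd, rfl⟩
  rw [reflection_mk]
  by_cases h0 : x = 0
  · simp [h0]
  by_cases h1 : x = 1
  · simp [h1]
  rw [sideRank_mk ρ h0 h1, sideRank_mk ρ (unitInterval.symm_eq_zero.not.2 h1)
    (unitInterval.symm_eq_one.not.2 h0)]

theorem move_mem (u : 𝕀 ≃o 𝕀) {v : 𝕀 ≃o 𝕀} (hv : ∀ y, unitRank ρ (v y) = unitRank ρ y) :
    move u v ∈ invarianceSubgroup (sideRank ρ) := by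
  intro p
  obtain ⟨x, y, rfl⟩ : ∃ x y, p = mk x y := ⟨p.fst, p.snd, rfl⟩
  by_cases h0 : x = 0
  · simp [h0, move_mk_zero, hv]
  by_cases h1 : x = 1
  · simp [h1, move_mk_one]
  have hu0 : u x ≠ 0 := fun h => h0 (u.injective (h.trans (orderIso_zero u).symm))
  have hu1 : u x ≠ 1 := fun h => h1 (u.injective (h.trans (orderIso_one u).symm))
  rw [move_mk u v h0 h1, sideRank_mk ρ h0 h1, sideRank_mk ρ hu0 hu1]

/-- A half of the square that the point reflection moves onto the other half: the left side and the
part below the diagonal of the columns off the sides. -/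
def lowerHalf : Set AlexandroffSquare :=
  {p | p.fst = 0 ∨ p.fst ∈ Ioo 0 1 ∧ p.snd ≤ p.fst}

theorem exists_smul_mem_lowerHalf (ρ : ℝ → ℕ) (p : AlexandroffSquare) :
    ∃ g : invarianceSubgroup (sideRank ρ), g • p ∈ lowerHalf := by
  by_cases hmem : p ∈ lowerHalf
  · exact ⟨1, hmem⟩
  refine ⟨⟨reflection, reflection_mem ρ⟩, ?_⟩
  have h0 : p.fst ≠ 0 := fun h => hmem (Or.inl h)
  rcases eq_or_ne p.fst 1 with h1 | h1
  · exact Or.inl (unitInterval.symm_eq_zero.2 h1)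
  · have hfst : p.fst ∈ Ioo 0 1 :=
      ⟨unitInterval.pos_iff_ne_zero.2 h0, unitInterval.lt_one_iff_ne_one.2 h1⟩
    have hsnd : p.fst < p.snd := not_le.1 fun h => hmem (Or.inr ⟨hfst, h⟩)
    refine Or.inr ⟨⟨?_, ?_⟩, unitInterval.symm_le_symm.2 hsnd.le⟩
    · exact unitInterval.pos_iff_ne_zero.2 (unitInterval.symm_eq_zero.not.2 h1)
    · exact unitInterval.lt_one_iff_ne_one.2 (unitInterval.symm_eq_one.not.2 h0)

theorem mem_orbit_of_fst_eq_zero {m : ℕ} (hρ : IsHomogeneousRank ρ m) (hp : p.fst = 0)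
    (hq : q.fst = 0) (hstratum : stratum p = stratum q) (hrank : sideRank ρ p = sideRank ρ q) :
    q ∈ MulAction.orbit (invarianceSubgroup (sideRank ρ)) p := by
  obtain ⟨y, rfl⟩ : ∃ y, p = mk 0 y := ⟨p.snd, AlexandroffSquare.ext hp rfl⟩
  obtain ⟨z, rfl⟩ : ∃ z, q = mk 0 z := ⟨q.snd, AlexandroffSquare.ext hq rfl⟩
  obtain ⟨-, hends, hdiag⟩ := stratum_eq_stratum_iff.1 hstratum
  simp only [fst_mk, snd_mk] at hends hdiag
  rcases eq_zero_or_one_or_sigmoid y with rfl | rfl | ⟨s, rfl⟩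
  · obtain rfl : 0 = z := hdiag.1 rfl
    exact MulAction.mem_orbit_self _
  · obtain rfl : z = 1 := (hends.1 (Or.inr rfl)).resolve_left fun h => zero_ne_one (hdiag.2 h.symm)
    exact MulAction.mem_orbit_self _
  · obtain ⟨t, rfl⟩ : ∃ t, sigmoid t = z := by
      have hz := eq_zero_or_one_or_sigmoid z
      simp_all
    rw [sideRank_mk_zero, sideRank_mk_zero, unitRank_sigmoid, unitRank_sigmoid] at hrank
    obtain ⟨v, hv, hinv⟩ := hρ.exists_orderIso_unitInterval hrank
    rw [← hv, ← move_mk_zero (OrderIso.refl 𝕀)]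
    exact mem_orbit_of_mem (move_mem _ hinv) _

theorem mem_orbit_of_fst_mem_Ioo (ρ : ℝ → ℕ) (hp : p.fst ∈ Ioo 0 1) (hq : q.fst ∈ Ioo 0 1)
    (hp' : p.snd ≤ p.fst) (hq' : q.snd ≤ q.fst) (hstratum : stratum p = stratum q) :
    q ∈ MulAction.orbit (invarianceSubgroup (sideRank ρ)) p := by
  obtain ⟨-, hends, hdiag⟩ := stratum_eq_stratum_iff.1 hstratum
  have hzero : p.snd = 0 ↔ q.snd = 0 := by
    rwa [or_iff_left (hp'.trans_lt hp.2).ne, or_iff_left (hq'.trans_lt hq.2).ne] at hends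
  rw [eq_comm, eq_comm (a := q.fst)] at hdiag
  obtain ⟨u, hfst, hsnd⟩ := exists_orderIso_map_pair_unitInterval hp hq hp' hq' hzero hdiag
  have hmove : move u (OrderIso.refl 𝕀) p = q := by
    rw [← mk_fst_snd p, move_mk _ _ hp.1.ne' hp.2.ne, hfst, hsnd, mk_fst_snd]
  exact hmove ▸ mem_orbit_of_mem (move_mem u fun _ => rfl) p

theorem fst_eq_zero_of_mem_lowerHalf (hp : p ∈ lowerHalf) (hfst : p.fst = 0 ∨ p.fst = 1) :
    p.fst = 0 :=
  hp.elim id fun h => hfst.resolve_right h.1.2.ne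

theorem mem_orbit_of_mem_lowerHalf {m : ℕ} (hρ : IsHomogeneousRank ρ m) (hp : p ∈ lowerHalf)
    (hq : q ∈ lowerHalf) (hstratum : stratum p = stratum q)
    (hrank : sideRank ρ p = sideRank ρ q) :
    q ∈ MulAction.orbit (invarianceSubgroup (sideRank ρ)) p := by
  have hfst := (stratum_eq_stratum_iff.1 hstratum).1
  rcases hp with hp | ⟨hp, hp'⟩
  · exact mem_orbit_of_fst_eq_zero hρ hp
      (fst_eq_zero_of_mem_lowerHalf hq (hfst.1 (Or.inl hp))) hstratum hrank
  · have hp0 : p.fst ≠ 0 := hp.1.ne'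
    have hq0 : q.fst ≠ 0 := fun h => (hfst.2 (Or.inl h)).elim hp0 hp.2.ne
    obtain ⟨hq, hq'⟩ := hq.resolve_left hq0
    exact mem_orbit_of_fst_mem_Ioo ρ hp hq hp' hq' hstratum

theorem orbit_eq_orbit_of_invariants_eq {m : ℕ} (hρ : IsHomogeneousRank ρ m)
    (hstratum : stratum p = stratum q) (hrank : sideRank ρ p = sideRank ρ q) :
    MulAction.orbit (invarianceSubgroup (sideRank ρ)) p =
      MulAction.orbit (invarianceSubgroup (sideRank ρ)) q := by
  have hstratum' (g : invarianceSubgroup (sideRank ρ)) (z : AlexandroffSquare) :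
      stratum (g • z) = stratum z := stratum_apply g z
  have hrank' (g : invarianceSubgroup (sideRank ρ)) (z : AlexandroffSquare) :
      sideRank ρ (g • z) = sideRank ρ z := g.2 z
  obtain ⟨g, hg⟩ := exists_smul_mem_lowerHalf ρ p
  obtain ⟨h, hh⟩ := exists_smul_mem_lowerHalf ρ q
  have hmem : h • q ∈ MulAction.orbit (invarianceSubgroup (sideRank ρ)) (g • p) :=
    mem_orbit_of_mem_lowerHalf hρ hg hh (by simpa only [hstratum'] using hstratum)
      (by simpa only [hrank'] using hrank)
  rw [← MulAction.orbit_smul g p, ← MulAction.orbit_smul h q]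
  exact (MulAction.orbit_eq_iff.2 hmem).symm

theorem closure_orbit_eq_iff {m : ℕ} (hρ : IsHomogeneousRank ρ m) :
    closure (MulAction.orbit (invarianceSubgroup (sideRank ρ)) p) =
        closure (MulAction.orbit (invarianceSubgroup (sideRank ρ)) q) ↔
      (stratum p, sideRank ρ p) = (stratum q, sideRank ρ q) := by
  rw [Prod.mk.injEq]
  refine ⟨fun h => ⟨stratum_eq_of_closure_orbit_eq h, ?_⟩, fun h => ?_⟩
  · exact lowerSemicontinuous_eq_of_closure_orbit_eq
      (lowerSemicontinuous_sideRank hρ.lowerSemicontinuous) (fun g z => g.2 z) h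
  · rw [orbit_eq_orbit_of_invariants_eq hρ h.1 h.2]

end Orbits

section Counting

variable {ρ : ℝ → ℕ} {m : ℕ}

theorem unitRank_le (hρ : range ρ = Iic m) (y : 𝕀) : unitRank ρ y ≤ m := by
  rcases eq_zero_or_one_or_sigmoid y with rfl | rfl | ⟨t, rfl⟩
  · exact unitRank_zero ρ ▸ Nat.zero_le m
  · exact unitRank_one ρ ▸ Nat.zero_le m
  · rw [unitRank_sigmoid]
    exact hρ.le (mem_range_self t)

theorem sideRank_le (hρ : range ρ = Iic m) (p : AlexandroffSquare) : sideRank ρ p ≤ m := by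
  unfold sideRank
  split_ifs
  exacts [unitRank_le hρ _, unitRank_le hρ _, Nat.zero_le m]

theorem stratum_eq_of_sideRank_ne_zero {p : AlexandroffSquare} (hp : sideRank ρ p ≠ 0) :
    stratum p = (true, false, false) := by
  obtain ⟨x, y, rfl⟩ : ∃ x y, p = mk x y := ⟨p.fst, p.snd, rfl⟩
  rcases eq_zero_or_one_or_sigmoid y with rfl | rfl | ⟨t, rfl⟩
  · simp [sideRank] at hp
  · simp [sideRank] at hp
  · have hx : x = 0 ∨ x = 1 := by
      by_contra! h
      exact hp (sideRank_mk ρ h.1 h.2 _)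
    rcases hx with rfl | rfl <;> simp [stratum, (sigmoid_ne_zero t).symm, (sigmoid_ne_one t).symm]

/-- The values of `stratum`: the ends of the diagonal are its only points on a horizontal or a
vertical side, and they lie on both. -/
def strata : Set (Bool × Bool × Bool) := {s | s.2.2 → s.1 = s.2.1}

theorem stratum_mem_strata (p : AlexandroffSquare) : stratum p ∈ strata := by
  intro hdiag
  have heq : p.fst = p.snd := of_decide_eq_true hdiag
  simp only [stratum, heq]

theorem exists_stratum_eq_of_mem_strata {s : Bool × Bool × Bool} (hs : s ∈ strata)
    (hside : s ≠ (true, false, false)) : ∃ p, stratum p = s ∧ sideRank ρ p = 0 := by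
  obtain ⟨a, b, d⟩ := s
  let x : 𝕀 := if a then 0 else sigmoid 0
  refine ⟨mk x (if d then x else if b then 1 else sigmoid 1), ?_⟩
  have h01 : sigmoid 0 ≠ sigmoid 1 := sigmoid_injective.ne zero_ne_one
  have h0 : 0 ≠ sigmoid 1 := (sigmoid_ne_zero 1).symm
  revert hs hside
  cases a <;> cases b <;> cases d <;> simp [stratum, strata, sideRank, x, h01, h0]

theorem range_stratum_sideRank (hρ : range ρ = Iic m) :
    range (fun p => (stratum p, sideRank ρ p)) =
      strata ×ˢ {0} ∪ {(true, false, false)} ×ˢ Ioc 0 m := by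
  apply Subset.antisymm
  · rintro _ ⟨p, rfl⟩
    rcases eq_or_ne (sideRank ρ p) 0 with hp | hp
    · exact Or.inl ⟨stratum_mem_strata p, hp⟩
    · exact Or.inr ⟨stratum_eq_of_sideRank_ne_zero hp, hp.bot_lt, sideRank_le hρ p⟩
  · have hside (j : ℕ) (hj : j ≤ m) :
        ((true, false, false), j) ∈ range fun p => (stratum p, sideRank ρ p) := by
      obtain ⟨t, rfl⟩ := hρ.ge hj
      refine ⟨mk 0 (sigmoid t), Prod.ext ?_ ((sideRank_mk_zero ρ _).trans (unitRank_sigmoid ρ t))⟩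
      simp [stratum, (sigmoid_ne_zero t).symm]
    rintro ⟨s, j⟩ (⟨hs, rfl⟩ | ⟨rfl, hj⟩)
    · by_cases hs' : s = (true, false, false)
      · exact hs' ▸ hside 0 (Nat.zero_le m)
      · obtain ⟨p, hp, hp'⟩ := exists_stratum_eq_of_mem_strata (ρ := ρ) hs hs'
        exact ⟨p, Prod.ext hp hp'⟩
    · exact hside j hj.2

theorem encard_strata : strata.encard = 6 := by
  have hfinset : strata = (Finset.univ.filter fun s : Bool × Bool × Bool => s.2.2 → s.1 = s.2.1) :=
    (Finset.coe_filter_univ _).symm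
  rw [hfinset, encard_coe_eq_coe_finsetCard]
  rfl

theorem encard_range_stratum_sideRank (hρ : range ρ = Iic m) :
    (range fun p => (stratum p, sideRank ρ p)).encard = m + 6 := by
  have hdisj : Disjoint (strata ×ˢ {0}) ({(true, false, false)} ×ˢ Ioc 0 m) :=
    disjoint_prod.2 (Or.inr (Set.disjoint_singleton_left.2 fun h => h.1.false))
  rw [range_stratum_sideRank hρ, encard_union_eq hdisj, encard_prod, encard_prod, encard_strata,
    encard_singleton, encard_singleton, mul_one, one_mul, ← Finset.coe_Ioc,
    encard_coe_eq_coe_finsetCard, Nat.card_Ioc, Nat.sub_zero, add_comm]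

end Counting

section OrbitClosures

theorem encard_closureOrbits_invarianceSubgroup {ρ : ℝ → ℕ} {m : ℕ} (hρ : IsHomogeneousRank ρ m) :
    (closureOrbits (invarianceSubgroup (sideRank ρ)) AlexandroffSquare).encard = (m + 6 : ℕ) :=
  (encard_range_congr fun _ _ => closure_orbit_eq_iff hρ).trans
    (encard_range_stratum_sideRank hρ.range_eq)

theorem encard_closureOrbits_top :
    (closureOrbits (⊤ : Subgroup (AlexandroffSquare ≃ₜ AlexandroffSquare))
      AlexandroffSquare).encard = (6 : ℕ) := by
  rw [← invarianceSubgroup_sideRank_zero]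
  exact encard_closureOrbits_invarianceSubgroup isHomogeneousRank_zero

variable (G : Subgroup (AlexandroffSquare ≃ₜ AlexandroffSquare))

theorem six_le_encard_closureOrbits : (6 : ℕ) ≤ (closureOrbits G AlexandroffSquare).encard := by
  rw [← encard_closureOrbits_top, ← invarianceSubgroup_sideRank_zero]
  refine encard_range_le_of_factorsThrough fun p q h =>
    (closure_orbit_eq_iff isHomogeneousRank_zero).2 ?_
  exact Prod.ext (stratum_eq_of_closure_orbit_eq h) ((sideRank_zero p).trans (sideRank_zero q).symm)

theorem encard_orbitClosures :
    (orbitClosures G).encard = (closureOrbits G AlexandroffSquare).encard := by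
  have horbit (p : AlexandroffSquare) : {q | ∃ g ∈ G, g p = q} = MulAction.orbit G p :=
    Set.ext fun q => ⟨fun ⟨g, hg, h⟩ => ⟨⟨g, hg⟩, h⟩, fun ⟨g, h⟩ => ⟨g, g.2, h⟩⟩
  have hfamily : orbitClosures G = closureOrbits G AlexandroffSquare :=
    Set.ext fun S => exists_congr fun p => (horbit p).symm ▸ eq_comm
  exact congrArg encard hfamily

end OrbitClosures

end AlexandroffSquare

open AlexandroffSquare

/-- `P_h(𝔸) = {n : n ≥ 5} ∪ {+∞}`: (i) the full homeomorphism group of the Alexandroff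
square has exactly 6 closures of orbits, i.e. height 5; (ii) every subgroup has
infinitely many, or at least 6, closures of orbits; (iii) for every `n ≥ 5` some
subgroup has exactly `n + 1` closures of orbits (height `n`); and (iv) some subgroup
has infinitely many closures of orbits (height `+∞`). -/
theorem alexandroff_heights :
    ((orbitClosures ⊤).Finite ∧ (orbitClosures ⊤).ncard = 6) ∧
    (∀ G, (orbitClosures G).Finite → 6 ≤ (orbitClosures G).ncard) ∧
    (∀ n : ℕ, 5 ≤ n → ∃ G, (orbitClosures G).Finite ∧ (orbitClosures G).ncard = n + 1) ∧
    (∃ G, (orbitClosures G).Infinite) := by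
  refine ⟨?_, fun G hG => ?_, fun n hn => ?_, ⊥, encard_eq_top_iff.1 ?_⟩
  · exact finite_and_ncard_eq ((encard_orbitClosures ⊤).trans encard_closureOrbits_top)
  · have hencard := (encard_orbitClosures G).symm.trans hG.cast_ncard_eq.symm
    exact Nat.cast_le.1 ((six_le_encard_closureOrbits G).trans_eq hencard)
  · obtain ⟨m, rfl⟩ := Nat.exists_eq_add_of_le' hn
    obtain ⟨ρ, hρ⟩ := exists_isHomogeneousRank m
    exact ⟨_, finite_and_ncard_eq
      ((encard_orbitClosures _).trans (encard_closureOrbits_invarianceSubgroup hρ))⟩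
  · exact (encard_orbitClosures ⊥).trans infinite_closureOrbits.encard_eq
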